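/- arXiv:2006.15355 — 4 statements merged into one kernel-verified Lean document; each statement's English description precedes it below -/
import Mathlib

section
/- For all finite joinless codes P, Q ⊆ nA* the following are equivalent: (1) P ∨ Q = ∅; (2) P·nA* ∩ Q·nA* = ∅; (3) P·nA^ω ∩ Q·nA^ω = ∅. -/
open Stream'

variable {A : Type*} {n : ℕ}

/-- The initial-factor order `u ≤_init v` on `n`-tuples of strings:
`u i` is a prefix of `v i` for every coordinate `i`. -/
def initLE (u v : Fin n → List A) : Prop := ∀ i, u i <+: v i

/-- `w` is the join (least upper bound w.r.t. `initLE`) of `u` and `v`. -/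
def IsJoin (u v w : Fin n → List A) : Prop :=
  initLE u w ∧ initLE v w ∧ ∀ z, initLE u z → initLE v z → initLE w z

/-- The join of `u` and `v` exists. -/
def JoinEx (u v : Fin n → List A) : Prop := ∃ w, IsJoin u v w

/-- The set join `X ∨ Y = {x ∨ y : x ∈ X, y ∈ Y, x ∨ y exists}`. -/
def setJoin (X Y : Set (Fin n → List A)) : Set (Fin n → List A) :=
  {w | ∃ x ∈ X, ∃ y ∈ Y, IsJoin x y w}

/-- A joinless code: no two distinct elements have a join. -/
def Joinless (S : Set (Fin n → List A)) : Prop :=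
  ∀ x ∈ S, ∀ y ∈ S, x ≠ y → ¬ JoinEx x y

/-- A maximal joinless code. -/
def MaxJoinless (S : Set (Fin n → List A)) : Prop :=
  Joinless S ∧ ∀ T : Set (Fin n → List A), Joinless T → S ⊆ T → S = T

/-- Coordinatewise concatenation in `nA*`. -/
def cat (x v : Fin n → List A) : Fin n → List A := fun i => x i ++ v i

/-- The right ideal `S·nA*` generated by `S`. -/
def rIdeal (S : Set (Fin n → List A)) : Set (Fin n → List A) :=
  {w | ∃ s ∈ S, ∃ v, w = cat s v}

/-- Coordinatewise concatenation of a tuple of finite strings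
with a tuple of right-infinite words. -/
def catOmega (x : Fin n → List A) (w : Fin n → Stream' A) : Fin n → Stream' A :=
  fun i => x i ++ₛ w i

/-- `S·nA^ω`. -/
def omegaIdeal (S : Set (Fin n → List A)) : Set (Fin n → Stream' A) :=
  {w | ∃ s ∈ S, ∃ u, w = catOmega s u}

/-- `P ≡_fin Q`: the symmetric difference of the generated right ideals is finite. -/
def equivFin (P Q : Set (Fin n → List A)) : Prop :=
  (symmDiff (rIdeal P) (rIdeal Q)).Finite

/-- `maxlen(S)`: the maximum coordinate length over a (finite nonempty) set. -/
noncomputable def maxlen (S : Set (Fin n → List A)) : ℕ :=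
  sSup {m | ∃ x ∈ S, ∃ i, (x i).length = m}

/-!
All three conditions are about pairs `x ∈ P`, `y ∈ Q`, and for a single pair they coincide.
Two prefixes of one word, finite or infinite, are comparable; conversely, if `x i` and `y i` are
comparable for every `i`, then taking the longer of the two in each coordinate gives `x ∨ y`.
Hence `x ∨ y` exists iff `x` and `y` have a common upper bound, iff they have a common
extension to a tuple of infinite words.
-/

theorem prefix_or_prefix_of_append_stream_eq {s t : List A} {u v : Stream' A}
    (h : s ++ₛ u = t ++ₛ v) : s <+: t ∨ t <+: s := by
  have eq_take (l : List A) (w : Stream' A) : l = (l ++ₛ w).take l.length := by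
    rw [take_append_of_le_length (h := le_rfl), List.take_length]
  rw [eq_take s u, eq_take t v, h, take_prefix, take_prefix]
  exact le_total s.length t.length

theorem catOmega_cat (x u : Fin n → List A) (w : Fin n → Stream' A) :
    catOmega (cat x u) w = catOmega x (catOmega u w) :=
  funext fun i => append_append_stream (x i) (u i) (w i)

theorem initLE_iff_exists_eq_cat {x w : Fin n → List A} : initLE x w ↔ ∃ v, w = cat x v := by
  constructor
  · intro h
    choose v hv using h
    exact ⟨v, funext fun i => (hv i).symm⟩
  · rintro ⟨v, rfl⟩ i
    exact List.prefix_append (x i) (v i)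

theorem mem_rIdeal_iff {S : Set (Fin n → List A)} {w : Fin n → List A} :
    w ∈ rIdeal S ↔ ∃ s ∈ S, initLE s w := by
  simp only [initLE_iff_exists_eq_cat]
  rfl

section Pairs

variable {x y : Fin n → List A}

theorem joinEx_of_forall_prefix_or_prefix (h : ∀ i, x i <+: y i ∨ y i <+: x i) :
    JoinEx x y := by
  have longer (i : Fin n) :
      ∃ w, x i <+: w ∧ y i <+: w ∧ ∀ z, x i <+: z → y i <+: z → w <+: z := by
    rcases h i with hxy | hyx
    · exact ⟨y i, hxy, List.prefix_rfl, fun _ _ hyz => hyz⟩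
    · exact ⟨x i, List.prefix_rfl, hyx, fun _ hxz _ => hxz⟩
  choose w hxw hyw hw using longer
  exact ⟨w, hxw, hyw, fun z hxz hyz i => hw i (z i) (hxz i) (hyz i)⟩

theorem joinEx_iff_exists_initLE : JoinEx x y ↔ ∃ z, initLE x z ∧ initLE y z := by
  constructor
  · rintro ⟨w, hxw, hyw, -⟩
    exact ⟨w, hxw, hyw⟩
  · rintro ⟨z, hxz, hyz⟩
    exact joinEx_of_forall_prefix_or_prefix fun i =>
      List.prefix_or_prefix_of_prefix (hxz i) (hyz i)

theorem joinEx_iff_exists_catOmega_eq [Nonempty A] :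
    JoinEx x y ↔ ∃ u v, catOmega x u = catOmega y v := by
  constructor
  · intro h
    obtain ⟨z, hxz, hyz⟩ := joinEx_iff_exists_initLE.1 h
    obtain ⟨u, hxu⟩ := initLE_iff_exists_eq_cat.1 hxz
    obtain ⟨v, hyv⟩ := initLE_iff_exists_eq_cat.1 hyz
    obtain ⟨a⟩ := ‹Nonempty A›
    let w : Fin n → Stream' A := fun _ => const a
    exact ⟨catOmega u w, catOmega v w, by rw [← catOmega_cat, ← catOmega_cat, ← hxu, hyv]⟩
  · rintro ⟨u, v, h⟩
    exact joinEx_of_forall_prefix_or_prefix fun i =>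
      prefix_or_prefix_of_append_stream_eq (congrFun h i)

end Pairs

section Sets

variable {P Q : Set (Fin n → List A)}

theorem setJoin_nonempty_iff : (setJoin P Q).Nonempty ↔ ∃ x ∈ P, ∃ y ∈ Q, JoinEx x y := by
  constructor
  · rintro ⟨w, x, hx, y, hy, hw⟩
    exact ⟨x, hx, y, hy, w, hw⟩
  · rintro ⟨x, hx, y, hy, w, hw⟩
    exact ⟨w, x, hx, y, hy, hw⟩

theorem rIdeal_inter_nonempty_iff :
    (rIdeal P ∩ rIdeal Q).Nonempty ↔ ∃ x ∈ P, ∃ y ∈ Q, JoinEx x y := by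
  simp only [joinEx_iff_exists_initLE, Set.Nonempty, Set.mem_inter_iff, mem_rIdeal_iff]
  constructor
  · rintro ⟨z, ⟨x, hx, hxz⟩, y, hy, hyz⟩
    exact ⟨x, hx, y, hy, z, hxz, hyz⟩
  · rintro ⟨x, hx, y, hy, z, hxz, hyz⟩
    exact ⟨z, ⟨x, hx, hxz⟩, y, hy, hyz⟩

theorem omegaIdeal_inter_nonempty_iff [Nonempty A] :
    (omegaIdeal P ∩ omegaIdeal Q).Nonempty ↔ ∃ x ∈ P, ∃ y ∈ Q, JoinEx x y := by
  simp only [joinEx_iff_exists_catOmega_eq]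
  constructor
  · rintro ⟨_, ⟨x, hx, u, rfl⟩, y, hy, v, h⟩
    exact ⟨x, hx, y, hy, u, v, h⟩
  · rintro ⟨x, hx, y, hy, u, v, h⟩
    exact ⟨catOmega x u, ⟨x, hx, u, rfl⟩, y, hy, v, h⟩

end Sets

theorem stmt_4_general [Nonempty A] (P Q : Set (Fin n → List A)) :
    (setJoin P Q = ∅ ↔ rIdeal P ∩ rIdeal Q = ∅) ∧
    (rIdeal P ∩ rIdeal Q = ∅ ↔ omegaIdeal P ∩ omegaIdeal Q = ∅) := by
  simp only [← Set.not_nonempty_iff_eq_empty, setJoin_nonempty_iff, rIdeal_inter_nonempty_iff,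
    omegaIdeal_inter_nonempty_iff, and_self]

/-- For finite joinless codes `P, Q`: `P ∨ Q = ∅` iff the generated right ideals are
disjoint, iff the generated `ω`-ideals are disjoint. -/
theorem stmt_4 [Fintype A] [Nonempty A] (hn : 1 ≤ n) (P Q : Set (Fin n → List A))
    (hPf : P.Finite) (hQf : Q.Finite) (hP : Joinless P) (hQ : Joinless Q) :
    (setJoin P Q = ∅ ↔ rIdeal P ∩ rIdeal Q = ∅) ∧
    (rIdeal P ∩ rIdeal Q = ∅ ↔ omegaIdeal P ∩ omegaIdeal Q = ∅) :=
  stmt_4_general P Q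
end

section
/- Let A be an alphabet with at least two letters. For every finite nonempty joinless code Q ⊆ nA* there exists a finite maximal joinless code C ⊆ nA* such that Q ⊆ C and maxlen(C) = maxlen(Q). (Such a C is called a completion of Q.) -/
open Stream'

variable {A : Type*} {n : ℕ}

/-!
By Zorn's lemma, `Q` extends to a code `C` that is maximal among the joinless codes whose elements
obey a given bound on their coordinate lengths. Such a `C` is maximal among all joinless codes:
truncating the coordinates of a tuple to the bound does not change which bounded tuples it has a
join with, and by maximality the truncation has a join with an element of `C`.
-/

theorem exists_superset_maximal_pairwise {α : Type*} {r : α → α → Prop} {s t : Set α}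
    (hst : s ⊆ t) (hs : s.Pairwise r) :
    ∃ m, s ⊆ m ∧ Maximal (fun u => u ⊆ t ∧ u.Pairwise r) m := by
  refine zorn_subset_nonempty {u | u ⊆ t ∧ u.Pairwise r} (fun c hc hchain _ => ?_) s ⟨hst, hs⟩
  exact ⟨⋃₀ c, ⟨Set.sUnion_subset fun u hu => (hc hu).1,
    (Set.pairwise_sUnion hchain.directedOn).2 fun u hu => (hc hu).2⟩,
    fun _ hu => Set.subset_sUnion_of_mem hu⟩

theorem joinEx_iff_forall_prefix_or_prefix {u v : Fin n → List A} :
    JoinEx u v ↔ ∀ i, u i <+: v i ∨ v i <+: u i := by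
  classical
  refine ⟨fun ⟨_, hu, hv, _⟩ i => List.prefix_or_prefix_of_prefix (hu i) (hv i), fun h => ?_⟩
  refine ⟨fun i => if u i <+: v i then v i else u i, fun i => ?_, fun i => ?_,
    fun z hu hv i => ?_⟩
  · by_cases hi : u i <+: v i <;> simp [hi]
  · by_cases hi : u i <+: v i <;> simp [hi, (h i).resolve_left]
  · by_cases hi : u i <+: v i <;> simp [hi, hu i, hv i]

theorem JoinEx.refl (u : Fin n → List A) : JoinEx u u :=
  joinEx_iff_forall_prefix_or_prefix.2 fun i => .inl (u i).prefix_rfl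

theorem JoinEx.symm {u v : Fin n → List A} (h : JoinEx u v) : JoinEx v u :=
  let ⟨w, hu, hv, hw⟩ := h
  ⟨w, hv, hu, fun z hvz huz => hw z huz hvz⟩

theorem take_prefix_or_prefix_take_iff {k : ℕ} {l₁ l₂ : List A} (h : l₂.length ≤ k) :
    (l₁.take k <+: l₂ ∨ l₂ <+: l₁.take k) ↔ (l₁ <+: l₂ ∨ l₂ <+: l₁) := by
  rw [List.prefix_take_iff, and_iff_left h]
  refine ⟨?_, Or.imp_left (List.take_prefix k l₁).trans⟩
  rintro (htake | hpre)
  · rcases le_total l₁.length k with hl₁ | hl₁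
    · exact .inl (List.take_of_length_le hl₁ ▸ htake)
    · have hlen : l₂.length ≤ (l₁.take k).length := h.trans_eq (List.length_take_of_le hl₁).symm
      exact .inr (htake.eq_of_length_le hlen ▸ List.take_prefix k l₁)
  · exact .inr hpre

theorem joinEx_take_iff {ℓ : Fin n → ℕ} {u v : Fin n → List A}
    (hv : ∀ i, (v i).length ≤ ℓ i) :
    JoinEx (fun i => (u i).take (ℓ i)) v ↔ JoinEx u v := by
  simp only [joinEx_iff_forall_prefix_or_prefix, take_prefix_or_prefix_take_iff (hv _)]

theorem exists_joinEx_of_maximal_joinless {B C : Set (Fin n → List A)}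
    (hC : Maximal (fun S => S ⊆ B ∧ Joinless S) C) {u : Fin n → List A} (hu : u ∈ B) :
    ∃ c ∈ C, JoinEx u c := by
  by_contra! h
  have hinsert : Joinless (insert u C) :=
    Set.Pairwise.insert hC.prop.2 fun c hc _ => ⟨h c hc, fun hcu => h c hc hcu.symm⟩
  have huC : u ∈ C :=
    hC.le_of_ge ⟨Set.insert_subset hu hC.prop.1, hinsert⟩ (Set.subset_insert u C)
      (Set.mem_insert u C)
  exact h u huC (.refl u)

theorem Joinless.maxJoinless_of_forall_exists_joinEx {S : Set (Fin n → List A)} (hS : Joinless S)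
    (h : ∀ u, ∃ s ∈ S, JoinEx u s) : MaxJoinless S := by
  refine ⟨hS, fun T hT hST => hST.antisymm fun u hu => ?_⟩
  obtain ⟨s, hs, hus⟩ := h u
  have hu_eq : u = s := by_contra fun hne => hT u hu s (hST hs) hne hus
  exact hu_eq ▸ hs

theorem finite_of_forall_length_le [Finite A] {S : Set (Fin n → List A)} {ℓ : Fin n → ℕ}
    (hS : ∀ x ∈ S, ∀ i, (x i).length ≤ ℓ i) : S.Finite :=
  (Set.Finite.pi' fun i => List.finite_length_le A (ℓ i)).subset hS

theorem length_le_maxlen {S : Set (Fin n → List A)} (hS : S.Finite) {x : Fin n → List A}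
    (hx : x ∈ S) (i : Fin n) : (x i).length ≤ maxlen S := by
  have hfinite : (Set.image2 (fun (y : Fin n → List A) j => (y j).length) S Set.univ).Finite :=
    hS.image2 _ Set.finite_univ
  refine le_csSup (hfinite.subset ?_).bddAbove ⟨x, hx, i, rfl⟩
  rintro _ ⟨y, hy, j, rfl⟩
  exact ⟨y, hy, j, Set.mem_univ j, rfl⟩

theorem maxlen_eq_of_subset_of_forall_length_le {S T : Set (Fin n → List A)} (hST : S ⊆ T)
    (hT : ∀ x ∈ T, ∀ i, (x i).length ≤ maxlen S) : maxlen T = maxlen S := by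
  have hbound : maxlen S ∈ upperBounds {m | ∃ x ∈ T, ∃ i, (x i).length = m} := by
    rintro _ ⟨x, hx, i, rfl⟩
    exact hT x hx i
  exact le_antisymm (csSup_le' hbound)
    (csSup_le_csSup' ⟨_, hbound⟩ fun _ ⟨x, hx, h⟩ => ⟨x, hST hx, h⟩)

theorem stmt_9_general {Q : Set (Fin n → List A)} {ℓ : Fin n → ℕ} (hQ : Joinless Q)
    (hℓ : ∀ q ∈ Q, ∀ i, (q i).length ≤ ℓ i) :
    ∃ C, MaxJoinless C ∧ Q ⊆ C ∧ ∀ x ∈ C, ∀ i, (x i).length ≤ ℓ i := by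
  obtain ⟨C, hQC, hC⟩ : ∃ C, Q ⊆ C ∧
      Maximal (fun S => S ⊆ {x : Fin n → List A | ∀ i, (x i).length ≤ ℓ i} ∧ Joinless S) C :=
    exists_superset_maximal_pairwise hℓ hQ
  have hCℓ : ∀ x ∈ C, ∀ i, (x i).length ≤ ℓ i := hC.prop.1
  have hjoin (u : Fin n → List A) : ∃ c ∈ C, JoinEx u c := by
    obtain ⟨c, hc, huc⟩ := exists_joinEx_of_maximal_joinless hC (u := fun i => (u i).take (ℓ i))
      fun i => List.length_take_le _ _
    exact ⟨c, hc, (joinEx_take_iff (hCℓ c hc)).1 huc⟩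
  exact ⟨C, Joinless.maxJoinless_of_forall_exists_joinEx hC.prop.2 hjoin, hQC, hCℓ⟩

/-- Existence of a finite completion of a finite nonempty joinless code, with the
same `maxlen` (for `|A| ≥ 2`). -/
theorem stmt_9 [Fintype A] (hA : 2 ≤ Fintype.card A) (hn : 1 ≤ n)
    (Q : Set (Fin n → List A)) (hQf : Q.Finite) (hQne : Q.Nonempty)
    (hQ : Joinless Q) :
    ∃ C : Set (Fin n → List A),
      C.Finite ∧ MaxJoinless C ∧ Q ⊆ C ∧ maxlen C = maxlen Q := by
  obtain ⟨C, hC, hQC, hlen⟩ := stmt_9_general hQ fun _ hq i => length_le_maxlen hQf hq i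
  exact ⟨C, finite_of_forall_length_le hlen, hC, hQC,
    maxlen_eq_of_subset_of_forall_length_le hQC hlen⟩
end

section
/- For every right-ideal morphism f of nA*: (1) if f(domC(f)) is joinless then domC(f) is joinless; (2) if C ⊆ Im(f) is an initial-factor code then f⁻¹(C) is an initial-factor code; (3) if C ⊆ Im(f) is a joinless code then f⁻¹(C) is a joinless code; (4) if domC(f) is finite then for every y ∈ Im(f) the fiber f⁻¹(y) is finite. -/
open Stream'

variable {A : Type*} {n : ℕ}

/-- A right-ideal morphism of `nA*`, as a partial function:
if `f x = y` then `f (xv) = yv` (in particular the domain is a right ideal). -/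
def IsRIM (f : (Fin n → List A) →. (Fin n → List A)) : Prop :=
  ∀ x y, y ∈ f x → ∀ v, cat y v ∈ f (cat x v)

/-- The domain code `domC f`: the `initLE`-minimal elements of `Dom f`
(the unique initial-factor code generating the right ideal `Dom f`). -/
def domC (f : (Fin n → List A) →. (Fin n → List A)) : Set (Fin n → List A) :=
  {x ∈ f.Dom | ∀ y ∈ f.Dom, initLE y x → y = x}

/-- The image code `imC f`: the `initLE`-minimal elements of `Im f`
(the unique initial-factor code generating the right ideal `Im f`). -/
def imC (f : (Fin n → List A) →. (Fin n → List A)) : Set (Fin n → List A) :=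
  {y ∈ f.ran | ∀ z ∈ f.ran, initLE z y → z = y}

/-- An initial-factor code: an antichain for the strict initial-factor order. -/
def InitCode (S : Set (Fin n → List A)) : Prop :=
  ∀ x ∈ S, ∀ y ∈ S, initLE x y → x = y

/-- `maxlen` of a right-ideal morphism: `maxlen(domC(f) ∪ f(domC(f)))`. -/
noncomputable def maxlenM (f : (Fin n → List A) →. (Fin n → List A)) : ℕ :=
  maxlen (domC f ∪ f.image (domC f))

/-!
If `xs = x't` then `f(x)s = f(x')t`. Since `x` and `x'` have a join as soon as they have a common
upper bound, `f` carries joinable pairs to joinable pairs; and when `f(x) = f(x')`, left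
cancellation gives `s = t` and right cancellation gives `x = x'`, so `f` is injective on joinable
pairs. Both properties together pull codes back. For fibers, `Dom(f)` is covered by the sets
`d·nA*` with `d ∈ domC(f)`, and left cancellation shows that a fiber meets each of them in at most
one point.
-/

section InitialFactorOrder

variable {u v w s t : Fin n → List A}

lemma cat_left_cancel (h : cat u s = cat u t) : s = t :=
  funext fun i => List.append_cancel_left (congrFun h i)

lemma cat_right_cancel (h : cat u t = cat v t) : u = v :=
  funext fun i => List.append_cancel_right (congrFun h i)

lemma initLE_refl (u : Fin n → List A) : initLE u u := fun _ => List.prefix_rfl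

lemma initLE.trans (huv : initLE u v) (hvw : initLE v w) : initLE u w :=
  fun i => (huv i).trans (hvw i)

lemma initLE_cat (u t : Fin n → List A) : initLE u (cat u t) :=
  fun i => List.prefix_append (u i) (t i)

lemma initLE.exists_cat_eq (h : initLE u v) : ∃ t, cat u t = v := by
  choose t ht using h
  exact ⟨t, funext ht⟩

lemma initLE.eq_of_sum_length_le (h : initLE u v)
    (hlen : ∑ i, (v i).length ≤ ∑ i, (u i).length) : u = v := by
  have hle : ∀ i ∈ Finset.univ, (u i).length ≤ (v i).length := fun i _ => (h i).length_le
  have heq := (Finset.sum_eq_sum_iff_of_le hle).1 ((Finset.sum_le_sum hle).antisymm hlen)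
  exact funext fun i => (h i).eq_of_length (heq i (Finset.mem_univ i))

lemma exists_initLE_minimal {S : Set (Fin n → List A)} (hu : u ∈ S) :
    ∃ m ∈ S, (∀ v ∈ S, initLE v m → v = m) ∧ initLE m u := by
  obtain ⟨m, ⟨hm, hmu⟩, hmin⟩ :=
    (measure fun v : Fin n → List A => ∑ i, (v i).length).wf.has_min
      {v ∈ S | initLE v u} ⟨u, hu, initLE_refl u⟩
  refine ⟨m, hm, fun v hv hvm => ?_, hmu⟩
  exact hvm.eq_of_sum_length_le (not_lt.1 (hmin v ⟨hv, hvm.trans hmu⟩))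

/-- Two prefixes of the same word are comparable, so the join is the longer one in each
coordinate. -/
lemma joinEx_of_initLE_of_initLE (hu : initLE u w) (hv : initLE v w) : JoinEx u v := by
  have exists_lub (i : Fin n) :
      ∃ c, u i <+: c ∧ v i <+: c ∧ ∀ z, u i <+: z → v i <+: z → c <+: z := by
    rcases List.prefix_or_prefix_of_prefix (hu i) (hv i) with huv | hvu
    · exact ⟨v i, huv, List.prefix_rfl, fun _ _ hz => hz⟩
    · exact ⟨u i, List.prefix_rfl, hvu, fun _ hz _ => hz⟩
  choose c huc hvc hc using exists_lub
  exact ⟨c, huc, hvc, fun z hz hz' i => hc i (z i) (hz i) (hz' i)⟩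

lemma initLE.joinEx (h : initLE u v) : JoinEx u v :=
  joinEx_of_initLE_of_initLE h (initLE_refl v)

lemma JoinEx.exists_cat_eq_cat (h : JoinEx u v) : ∃ s t, cat u s = cat v t := by
  obtain ⟨w, hu, hv, -⟩ := h
  obtain ⟨s, rfl⟩ := hu.exists_cat_eq
  obtain ⟨t, ht⟩ := hv.exists_cat_eq
  exact ⟨s, t, ht.symm⟩

end InitialFactorOrder

lemma Joinless.mono {S T : Set (Fin n → List A)} (hT : Joinless T) (hST : S ⊆ T) : Joinless S :=
  fun x hx y hy => hT x (hST hx) y (hST hy)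

lemma exists_mem_domC_initLE {f : (Fin n → List A) →. (Fin n → List A)}
    {x : Fin n → List A} (hx : x ∈ f.Dom) : ∃ d ∈ domC f, initLE d x := by
  obtain ⟨d, hd, hmin, hdx⟩ := exists_initLE_minimal hx
  exact ⟨d, ⟨hd, hmin⟩, hdx⟩

namespace IsRIM

variable {f : (Fin n → List A) →. (Fin n → List A)} {x x' y y' d s t : Fin n → List A}
  {C S : Set (Fin n → List A)}

lemma cat_eq_cat (hf : IsRIM f) (hy : y ∈ f x) (hy' : y' ∈ f x') (h : cat x s = cat x' t) :
    cat y s = cat y' t :=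
  Part.mem_unique (hf x y hy s) (h ▸ hf x' y' hy' t)

lemma initLE_of_initLE (hf : IsRIM f) (hy : y ∈ f x) (hy' : y' ∈ f x') (h : initLE x x') :
    initLE y y' := by
  obtain ⟨t, rfl⟩ := h.exists_cat_eq
  exact Part.mem_unique (hf x y hy t) hy' ▸ initLE_cat y t

lemma joinEx_of_joinEx (hf : IsRIM f) (hy : y ∈ f x) (hy' : y' ∈ f x') (h : JoinEx x x') :
    JoinEx y y' := by
  obtain ⟨s, t, hst⟩ := h.exists_cat_eq_cat
  exact joinEx_of_initLE_of_initLE (initLE_cat y s)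
    (hf.cat_eq_cat hy hy' hst ▸ initLE_cat y' t)

lemma eq_of_joinEx (hf : IsRIM f) (hy : y ∈ f x) (hy' : y ∈ f x') (h : JoinEx x x') :
    x = x' := by
  obtain ⟨s, t, hst⟩ := h.exists_cat_eq_cat
  obtain rfl : s = t := cat_left_cancel (hf.cat_eq_cat hy hy' hst)
  exact cat_right_cancel hst

lemma joinless_preimage (hf : IsRIM f) (hC : Joinless C) : Joinless (f.preimage C) := by
  rintro x ⟨y, hyC, hy⟩ x' ⟨y', hyC', hy'⟩ hne hjoin
  have hyne : y ≠ y' := fun heq => hne (hf.eq_of_joinEx hy (heq ▸ hy') hjoin)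
  exact hC y hyC y' hyC' hyne (hf.joinEx_of_joinEx hy hy' hjoin)

lemma joinless_of_joinless_image (hf : IsRIM f) (hS : S ⊆ f.Dom) (h : Joinless (f.image S)) :
    Joinless S := by
  have hsub : S ⊆ f.preimage (f.image S) := by
    intro x hx
    obtain ⟨y, hy⟩ := (f.mem_dom x).1 (hS hx)
    exact ⟨y, ⟨x, hx, hy⟩, hy⟩
  exact (hf.joinless_preimage h).mono hsub

lemma initCode_preimage (hf : IsRIM f) (hC : InitCode C) : InitCode (f.preimage C) := by
  rintro x ⟨y, hyC, hy⟩ x' ⟨y', hyC', hy'⟩ hle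
  obtain rfl : y = y' := hC y hyC y' hyC' (hf.initLE_of_initLE hy hy' hle)
  exact hf.eq_of_joinEx hy hy' hle.joinEx

lemma subsingleton_fiber_above (hf : IsRIM f) (hd : d ∈ f.Dom) (y : Fin n → List A) :
    {x | y ∈ f x ∧ initLE d x}.Subsingleton := by
  rintro x ⟨hx, hdx⟩ x' ⟨hx', hdx'⟩
  obtain ⟨s, rfl⟩ := hdx.exists_cat_eq
  obtain ⟨t, rfl⟩ := hdx'.exists_cat_eq
  obtain ⟨z, hz⟩ := (f.mem_dom d).1 hd
  have hzst : cat z s = cat z t :=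
    (Part.mem_unique (hf d z hz s) hx).trans (Part.mem_unique hx' (hf d z hz t))
  rw [cat_left_cancel hzst]

lemma finite_fiber (hf : IsRIM f) (hfin : (domC f).Finite) (y : Fin n → List A) :
    (f.preimage {y}).Finite := by
  have hcover : f.preimage {y} ⊆ ⋃ d ∈ domC f, {x | y ∈ f x ∧ initLE d x} := by
    rintro x ⟨_, rfl, hy⟩
    obtain ⟨d, hd, hdx⟩ := exists_mem_domC_initLE ((f.mem_dom x).2 ⟨_, hy⟩)
    exact Set.mem_biUnion hd ⟨hy, hdx⟩
  exact (hfin.biUnion fun d hd => (hf.subsingleton_fiber_above hd.1 y).finite).subset hcover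

end IsRIM

theorem stmt_13_general (f : (Fin n → List A) →. (Fin n → List A)) (hf : IsRIM f) :
    (Joinless (f.image (domC f)) → Joinless (domC f)) ∧
    (∀ C, InitCode C → InitCode (f.preimage C)) ∧
    (∀ C, Joinless C → Joinless (f.preimage C)) ∧
    ((domC f).Finite → ∀ y, (f.preimage {y}).Finite) :=
  ⟨hf.joinless_of_joinless_image fun _ hx => hx.1,
    fun _ hC => hf.initCode_preimage hC,
    fun _ hC => hf.joinless_preimage hC,
    fun hfin y => hf.finite_fiber hfin y⟩

/-- Inverse images of codes under a right-ideal morphism. -/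
theorem stmt_13 [Fintype A] [Nonempty A] (hn : 1 ≤ n)
    (f : (Fin n → List A) →. (Fin n → List A)) (hf : IsRIM f) :
    (Joinless (f.image (domC f)) → Joinless (domC f)) ∧
    (∀ C ⊆ f.ran, InitCode C → InitCode (f.preimage C)) ∧
    (∀ C ⊆ f.ran, Joinless C → Joinless (f.preimage C)) ∧
    ((domC f).Finite → ∀ y ∈ f.ran, (f.preimage {y}).Finite) := by
  obtain ⟨hdom, hinit, hjoinless, hfiber⟩ := stmt_13_general f hf
  exact ⟨hdom, fun C _ => hinit C, fun C _ => hjoinless C, fun hfin y _ => hfiber hfin y⟩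
end

section
/- If g is an injective right-ideal morphism of nA*, then g is normal, i.e. g(domC(g)) = imC(g). -/
open Stream'

variable {A : Type*} {n : ℕ}

/-! On its domain, an injective right-ideal morphism both preserves and reflects the initial-factor
order: it carries `xv` to `g(x)v`, and `g(x') = g(x)v = g(xv)` forces `x' = xv`. It is therefore an
order isomorphism from `Dom g` onto `Im g`, so it matches up their minimal elements. -/

lemma initLE_iff_exists_cat {u w : Fin n → List A} : initLE u w ↔ ∃ v, cat u v = w := by
  simp only [initLE, List.IsPrefix, cat, funext_iff, Classical.skolem]

lemma initLE_antisymm {u v : Fin n → List A} (huv : initLE u v) (hvu : initLE v u) : u = v :=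
  funext fun i ↦ antisymm (huv i) (hvu i)

section

variable {g : (Fin n → List A) →. (Fin n → List A)} {x x' y y' : Fin n → List A}

lemma IsRIM.initLE_of_initLE_s14 (hg : IsRIM g) (hy : y ∈ g x) (hy' : y' ∈ g x')
    (hx : initLE x x') : initLE y y' := by
  obtain ⟨v, rfl⟩ := initLE_iff_exists_cat.mp hx
  exact initLE_iff_exists_cat.mpr ⟨v, Part.mem_unique (hg x y hy v) hy'⟩

lemma IsRIM.initLE_iff_of_injective (hg : IsRIM g)
    (hinj : ∀ x₁ x₂ y, y ∈ g x₁ → y ∈ g x₂ → x₁ = x₂) (hy : y ∈ g x) (hy' : y' ∈ g x') :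
    initLE y y' ↔ initLE x x' := by
  refine ⟨fun hle ↦ ?_, hg.initLE_of_initLE_s14 hy hy'⟩
  obtain ⟨v, rfl⟩ := initLE_iff_exists_cat.mp hle
  exact initLE_iff_exists_cat.mpr ⟨v, hinj _ _ _ (hg x y hy v) hy'⟩

lemma mem_imC_iff_mem_domC
    (hle : ∀ {x x' y y'}, y ∈ g x → y' ∈ g x' → (initLE y y' ↔ initLE x x')) (hy : y ∈ g x) :
    y ∈ imC g ↔ x ∈ domC g := by
  constructor
  · rintro ⟨-, hmin⟩
    refine ⟨(PFun.mem_dom g x).mpr ⟨y, hy⟩, fun x' hx' hx'x ↦ ?_⟩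
    obtain ⟨y', hy'⟩ := (PFun.mem_dom g x').mp hx'
    obtain rfl : y' = y := hmin y' ⟨x', hy'⟩ ((hle hy' hy).mpr hx'x)
    exact initLE_antisymm hx'x ((hle hy hy').mp fun _ ↦ List.prefix_rfl)
  · rintro ⟨-, hmin⟩
    refine ⟨⟨x, hy⟩, fun y' ⟨x', hy'⟩ hy'y ↦ ?_⟩
    obtain rfl : x' = x := hmin x' ((PFun.mem_dom g x').mpr ⟨y', hy'⟩) ((hle hy' hy).mp hy'y)
    exact Part.mem_unique hy' hy

end

theorem stmt_14_general (g : (Fin n → List A) →. (Fin n → List A)) (hg : IsRIM g)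
    (hinj : ∀ x₁ x₂ y, y ∈ g x₁ → y ∈ g x₂ → x₁ = x₂) :
    g.image (domC g) = imC g := by
  have hmem {x y} (hy : y ∈ g x) : y ∈ imC g ↔ x ∈ domC g :=
    mem_imC_iff_mem_domC (hg.initLE_iff_of_injective hinj) hy
  ext y
  constructor
  · rintro ⟨x, hx, hy⟩
    exact (hmem hy).mpr hx
  · intro hyC
    obtain ⟨x, hy⟩ := hyC.1
    exact ⟨x, (hmem hy).mp hyC, hy⟩

/-- An injective right-ideal morphism is normal: `g(domC g) = imC g`. -/
theorem stmt_14 [Fintype A] [Nonempty A] (hn : 1 ≤ n)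
    (g : (Fin n → List A) →. (Fin n → List A)) (hg : IsRIM g)
    (hinj : ∀ x₁ x₂ y, y ∈ g x₁ → y ∈ g x₂ → x₁ = x₂) :
    g.image (domC g) = imC g :=
  stmt_14_general g hg hinj
end
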